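/- There exist constants c > 0 and C > 0 such that for every U ∈ X, Re B(U,U) ≥ c ‖U‖²_X − C ‖U‖²_H; that is, the form B satisfies a Gårding-type coercivity inequality on X relative to the weaker norm of H. -/

import Mathlib

noncomputable section

open MeasureTheory Complex Filter Topology
open scoped Real NNReal ContDiff

/-- The plane `ℝ²`. -/
abbrev R2 : Type := EuclideanSpace ℝ (Fin 2)

/-- Euclidean dot product on `ℝ²`. -/
def rdot (x ξ : R2) : ℝ := x 0 * ξ 0 + x 1 * ξ 1

/-- `testFT φ ξ = ∫ e^{i x·ξ} φ(x) dx`, the (inverse-type) Fourier integral of a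
test function `φ`. -/
def testFT (φ : R2 → ℂ) (ξ : R2) : ℂ :=
  ∫ x : R2, Complex.exp (Complex.I * (rdot x ξ : ℂ)) * φ x

/-- The squared `H^s(ℝ²)` norm of the distribution whose Fourier transform is `F`:
`‖f‖² = (2π)⁻² ∫ (1+|ξ|²)^s |f̂(ξ)|² dξ`. -/
def wnormSq (s : ℝ) (F : R2 → ℂ) : ℝ :=
  ((2 * π) ^ 2)⁻¹ * ∫ ξ : R2, ((1 : ℝ) + ‖ξ‖ ^ 2) ^ s * ‖F ξ‖ ^ 2

/-- The `H^s(ℝ²)` norm (Fourier-side representation). -/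
def wnorm (s : ℝ) (F : R2 → ℂ) : ℝ := Real.sqrt (wnormSq s F)

/-- `F` is the Fourier transform of an element of `H^s(ℝ²)`. -/
def MemHs (s : ℝ) (F : R2 → ℂ) : Prop :=
  AEStronglyMeasurable F (volume : Measure R2) ∧
    Integrable (fun ξ : R2 => ((1 : ℝ) + ‖ξ‖ ^ 2) ^ s * ‖F ξ‖ ^ 2) volume

/-- An element `f` of `H̃^s(Γ)`: a distribution on `ℝ²` of Sobolev regularity `s`
supported in the closure of `Γ`, represented by its Fourier transform `ft`
(a continuous function, `f` being a compactly supported distribution).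
The support condition is expressed by testing against smooth compactly supported
functions `φ` whose support avoids `closure Γ`, via the Parseval pairing
`∫ f φ dx = (2π)⁻² ∫ f̂(ξ) φ̌(ξ) dξ` with `φ̌(ξ) = ∫ e^{ix·ξ} φ(x) dx`. -/
structure HTildeElt (s : ℝ) (Γ : Set R2) where
  ft : R2 → ℂ
  cont : Continuous ft
  mem : Integrable (fun ξ : R2 => ((1 : ℝ) + ‖ξ‖ ^ 2) ^ s * ‖ft ξ‖ ^ 2) volume
  supp : ∀ φ : R2 → ℂ, ContDiff ℝ ∞ φ → HasCompactSupport φ →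
    tsupport φ ∩ closure Γ = ∅ → (∫ ξ : R2, ft ξ * testFT φ ξ) = 0

/-- `Γ` is a bounded Lipschitz domain in `ℝ²`: a nonempty bounded open set whose
boundary is locally, after a rigid motion, the graph of a Lipschitz function with
the domain on one side. -/
def IsLipschitzDomain (Γ : Set R2) : Prop :=
  IsOpen Γ ∧ Bornology.IsBounded Γ ∧ Γ.Nonempty ∧
    ∀ x ∈ frontier Γ, ∃ (e : R2 ≃ₗᵢ[ℝ] R2) (L : ℝ≥0) (f : ℝ → ℝ) (U : Set R2),
      LipschitzWith L f ∧ IsOpen U ∧ x ∈ U ∧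
        ∀ y ∈ U, (y ∈ Γ ↔ f (e y 0) < e y 1)

/-- `ξ·V̂(ξ)`, i.e. `-i` times the Fourier transform of `div V`. -/
def dotFt (F1 F2 : R2 → ℂ) (ξ : R2) : ℂ := (ξ 0 : ℂ) * F1 ξ + (ξ 1 : ℂ) * F2 ξ

/-- `ξ⊥·V̂(ξ)`, i.e. `-i` times the Fourier transform of `curl V`. -/
def curlFt (F1 F2 : R2 → ℂ) (ξ : R2) : ℂ := (ξ 1 : ℂ) * F1 ξ - (ξ 0 : ℂ) * F2 ξ

/-- An element of `X = H̃^{-1/2}_div(Γ)`: a pair of elements of `H̃^{-1/2}(Γ)`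
whose distributional divergence also belongs to `H̃^{-1/2}(Γ)`. -/
structure Xelt (Γ : Set R2) where
  c1 : HTildeElt (-(1/2) : ℝ) Γ
  c2 : HTildeElt (-(1/2) : ℝ) Γ
  divMem : Integrable (fun ξ : R2 =>
    ((1 : ℝ) + ‖ξ‖ ^ 2) ^ (-(1/2) : ℝ) * ‖dotFt c1.ft c2.ft ξ‖ ^ 2) volume

/-- The Fourier transform of `div V`. -/
def divFt {Γ : Set R2} (V : Xelt Γ) (ξ : R2) : ℂ :=
  Complex.I * dotFt V.c1.ft V.c2.ft ξ

/-- The squared `H`-norm `‖V‖²_H` of a vector field. -/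
def HnormSq {Γ : Set R2} (V : Xelt Γ) : ℝ :=
  wnormSq (-(1/2)) V.c1.ft + wnormSq (-(1/2)) V.c2.ft

/-- The squared `X`-norm `‖V‖²_X = ‖V‖²_H + ‖div V‖²_{H̃^{-1/2}}`. -/
def XnormSq {Γ : Set R2} (V : Xelt Γ) : ℝ :=
  HnormSq V + wnormSq (-(1/2)) (divFt V)

/-- The `X`-norm. -/
def Xnorm {Γ : Set R2} (V : Xelt Γ) : ℝ := Real.sqrt (XnormSq V)

/-- `ĝ₀(ξ) = i/√(k²-|ξ|²)`, with the branch `√(k²-|ξ|²) = i√(|ξ|²-k²)` for `|ξ| > k`. -/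
def g0hat (k : ℝ) (ξ : R2) : ℂ :=
  if ‖ξ‖ < k then Complex.I / ((Real.sqrt (k ^ 2 - ‖ξ‖ ^ 2) : ℝ) : ℂ)
  else 1 / ((Real.sqrt (‖ξ‖ ^ 2 - k ^ 2) : ℝ) : ℂ)

/-- The integrand of the sesquilinear form `B`:
`ĝ₀(ξ) [ (|ξ|²-k²) a₁ b̄₁ - k² a₂ b̄₂ ]` with `a₁ = ξ·Ŵ/|ξ|`, `a₂ = ξ⊥·Ŵ/|ξ|`, etc. -/
def Bintegrand (k : ℝ) (F1 F2 G1 G2 : R2 → ℂ) (ξ : R2) : ℂ :=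
  g0hat k ξ *
    (((‖ξ‖ ^ 2 - k ^ 2 : ℝ) : ℂ) * (dotFt F1 F2 ξ * starRingEnd ℂ (dotFt G1 G2 ξ)) -
      ((k ^ 2 : ℝ) : ℂ) * (curlFt F1 F2 ξ * starRingEnd ℂ (curlFt G1 G2 ξ))) /
    ((‖ξ‖ ^ 2 : ℝ) : ℂ)

/-- The sesquilinear form `B(W,V)`. -/
def Bform (k : ℝ) {Γ : Set R2} (W V : Xelt Γ) : ℂ :=
  ∫ ξ : R2, Bintegrand k W.c1.ft W.c2.ft V.c1.ft V.c2.ft ξ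

/-- The sesquilinear form `E(q,V) = B(curl⃗ q, V)`, where
`curl⃗ q = (∂q/∂x₂, -∂q/∂x₁)` has Fourier transform `(iξ₂ q̂, -iξ₁ q̂)`. -/
def Eform (k : ℝ) {Γ : Set R2} (q : HTildeElt (1/2 : ℝ) Γ) (V : Xelt Γ) : ℂ :=
  ∫ ξ : R2, Bintegrand k (fun η => Complex.I * (η 1 : ℂ) * q.ft η)
      (fun η => -(Complex.I * (η 0 : ℂ) * q.ft η)) V.c1.ft V.c2.ft ξ

/-- The inner product of the Hilbert space `X`; by the Riesz representation
theorem, every bounded conjugate-linear functional on `X` is `V ↦ Xinner Y V`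
for a unique `Y ∈ X`, with functional norm `Xnorm Y`. -/
def Xinner {Γ : Set R2} (Y V : Xelt Γ) : ℂ :=
  ((((2 * π) ^ 2)⁻¹ : ℝ) : ℂ) * ∫ ξ : R2, ((((1 : ℝ) + ‖ξ‖ ^ 2) ^ (-(1/2) : ℝ) : ℝ) : ℂ) *
    (Y.c1.ft ξ * starRingEnd ℂ (V.c1.ft ξ) + Y.c2.ft ξ * starRingEnd ℂ (V.c2.ft ξ) +
      divFt Y ξ * starRingEnd ℂ (divFt V ξ))

/-- `√(k²-|ξ|²)`, with the branch `i√(|ξ|²-k²)` for `|ξ| > k`. -/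
def rootk (k : ℝ) (ξ : R2) : ℂ :=
  if ‖ξ‖ < k then ((Real.sqrt (k ^ 2 - ‖ξ‖ ^ 2) : ℝ) : ℂ)
  else Complex.I * ((Real.sqrt (‖ξ‖ ^ 2 - k ^ 2) : ℝ) : ℂ)

/-- The Fourier multiplier `i/(2√(k²-|ξ|²))` of the Helmholtz single-layer
operator `T` with kernel `e^{ik|x-y|}/(4π|x-y|)`. -/
def mT (k : ℝ) (ξ : R2) : ℂ := Complex.I / (2 * rootk k ξ)

/-- The Fourier multiplier `1/(2|ξ|)` of the Laplace single-layer operator `T₀`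
with kernel `1/(4π|x-y|)`. -/
def mT0 (ξ : R2) : ℂ := 1 / (2 * ((‖ξ‖ : ℝ) : ℂ))

/-- The Fourier multiplier of `R = T - T₀`. -/
def mR (k : ℝ) (ξ : R2) : ℂ := mT k ξ - mT0 ξ

/-- The distributions with Fourier data `G` and `E` have the same restriction to
the open set `Γ`: `⟨G - E, φ⟩ = 0` for all smooth `φ` compactly supported in `Γ`
(pairing written on the Fourier side). -/
def AgreeOn (Γ : Set R2) (G E : R2 → ℂ) : Prop :=
  ∀ φ : R2 → ℂ, ContDiff ℝ ∞ φ → HasCompactSupport φ → tsupport φ ⊆ Γ →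
    (∫ ξ : R2, (G ξ - E ξ) * testFT φ ξ) = 0

/-- The duality pairing `⟨f, ψ⟩` between `H^{1/2}(Γ)` and `H̃^{-1/2}(Γ)`, written
on the Fourier side (Plancherel): `(2π)⁻² ∫ f̂(ξ) conj(ψ̂(ξ)) dξ`, where `G = f̂`
is the Fourier data of (an extension of) `f`. -/
def dualPair (G ψ : R2 → ℂ) : ℂ :=
  ((((2 * π) ^ 2)⁻¹ : ℝ) : ℂ) * ∫ ξ : R2, G ξ * starRingEnd ℂ (ψ ξ)

/-!
Write `w = (1 + |ξ|²)^(-1/2)`. Since `|a₁|² + |a₂|² = |Û|²`, the integrand of `B(U, U)` is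
`ĝ₀ (|ξ·Û|² - k²|Û|²)`. For `|ξ| > k` the symbol `ĝ₀` is real and at least `w`; for `|ξ| ≤ k` it
contributes nothing to the real part, and there `|ξ·Û|² ≤ k²|Û|²`. Hence
`Re B(U, U) ≥ ∫ w |ξ·Û|² - k² ∫ (w + |ĝ₀|) |Û|²`, and it remains to bound `∫ |ĝ₀| |Û|²` by the
`H`-norm. Away from the circle `|ξ| = k` this holds because `|ĝ₀| ≤ 2w`. Near the circle `ĝ₀` is
integrable, so a pointwise bound of `Û` by the `H`-norm suffices.

That pointwise bound comes from the compact support: if `χ` is a test function equal to `1` near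
the closure of `Γ`, then `û(0) = ⟨u, 1⟩ = ⟨u, χ⟩`, which is bounded by Cauchy–Schwarz with weights;
other frequencies reduce to `0` by modulating `u`. As supports are only tested against
`C_c^∞`, the identity `⟨u, 1⟩ = ⟨u, χ⟩` is obtained as the limit of
`⟨u, χ(·/c)⟩ = ⟨u, χ⟩` as `c → ∞`, where the Fourier transforms of the `χ(·/c)` form an approximate
identity.
-/

open scoped FourierTransform SchwartzMap

section Weight

variable {E : Type*} [NormedAddCommGroup E]

lemma one_add_norm_add_sq_le (x y : E) :
    1 + ‖x + y‖ ^ 2 ≤ 2 * (1 + ‖y‖ ^ 2) * (1 + ‖x‖ ^ 2) := by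
  have htri : ‖x + y‖ ^ 2 ≤ (‖x‖ + ‖y‖) ^ 2 := by gcongr; exact norm_add_le x y
  nlinarith [sq_nonneg (‖x‖ - ‖y‖), mul_nonneg (sq_nonneg ‖x‖) (sq_nonneg ‖y‖)]

/- Peetre's inequality. For negative `s` the roles of `x` and `x + y` are exchanged. -/
lemma one_add_norm_add_sq_rpow_le (s : ℝ) (x y : E) :
    (1 + ‖x + y‖ ^ 2) ^ s ≤ (2 * (1 + ‖y‖ ^ 2)) ^ |s| * (1 + ‖x‖ ^ 2) ^ s := by
  obtain hs | hs := le_total 0 s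
  · rw [abs_of_nonneg hs, ← Real.mul_rpow (by positivity) (by positivity)]
    exact Real.rpow_le_rpow (by positivity) (one_add_norm_add_sq_le x y) hs
  · have hx : 1 + ‖x‖ ^ 2 ≤ 2 * (1 + ‖y‖ ^ 2) * (1 + ‖x + y‖ ^ 2) := by
      simpa using one_add_norm_add_sq_le (x + y) (-y)
    have hpow := Real.rpow_le_rpow_of_nonpos (by positivity) hx hs
    rw [Real.mul_rpow (by positivity) (by positivity)] at hpow
    calc (1 + ‖x + y‖ ^ 2) ^ s
        = (2 * (1 + ‖y‖ ^ 2)) ^ |s| *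
            ((2 * (1 + ‖y‖ ^ 2)) ^ s * (1 + ‖x + y‖ ^ 2) ^ s) := by
          rw [← mul_assoc, ← Real.rpow_add (by positivity), abs_of_nonpos hs, neg_add_cancel,
            Real.rpow_zero, one_mul]
      _ ≤ (2 * (1 + ‖y‖ ^ 2)) ^ |s| * (1 + ‖x‖ ^ 2) ^ s := by gcongr

lemma continuous_one_add_norm_sq_rpow (s : ℝ) : Continuous fun x : E => (1 + ‖x‖ ^ 2) ^ s :=
  (by fun_prop : Continuous fun x : E => 1 + ‖x‖ ^ 2).rpow_const
    fun x => .inl (zero_lt_one_add_norm_sq x).ne'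

lemma exists_norm_le_one_add_norm_sq_rpow {E G : Type*} [NormedAddCommGroup E]
    [InnerProductSpace ℝ E] [NormedAddCommGroup G] [NormedSpace ℝ G] (X : 𝓢(E, G)) (r : ℝ) :
    ∃ C, 0 ≤ C ∧ ∀ x, ‖X x‖ ≤ C * (1 + ‖x‖ ^ 2) ^ (-r) := by
  have hr := Function.hasTemperateGrowth_one_add_norm_sq_rpow E r
  set Y := SchwartzMap.smulLeftCLM G (fun x : E => (1 + ‖x‖ ^ 2) ^ r) X with hY
  refine ⟨SchwartzMap.seminorm ℝ 0 0 Y, apply_nonneg _ _, fun x => ?_⟩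
  rw [Real.rpow_neg (by positivity), ← div_eq_mul_inv, le_div_iff₀ (by positivity), mul_comm]
  have hbound := Y.norm_le_seminorm ℝ x
  rwa [hY, SchwartzMap.smulLeftCLM_apply_apply hr, norm_smul,
    Real.norm_of_nonneg (by positivity), ← hY] at hbound

lemma one_add_norm_smul_sq_rpow_neg_le [NormedSpace ℝ E] {r : ℝ} (hr : 0 ≤ r) {c : ℝ}
    (hc : 1 ≤ c) (x : E) :
    (1 + ‖c • x‖ ^ 2) ^ (-r) ≤ (1 + ‖x‖ ^ 2) ^ (-r) := by
  refine Real.rpow_le_rpow_of_nonpos (by positivity) ?_ (neg_nonpos.2 hr)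
  gcongr
  rw [norm_smul, Real.norm_of_nonneg (by positivity)]
  exact le_mul_of_one_le_left (norm_nonneg x) hc

lemma tendsto_norm_pow_mul_one_add_norm_sq_rpow [NormedSpace ℝ E] {r : ℝ}
    (hr : (Module.finrank ℝ E : ℝ) < 2 * r) :
    Tendsto (fun x : E => ‖x‖ ^ Module.finrank ℝ E * (1 + ‖x‖ ^ 2) ^ (-r))
      (Bornology.cobounded E) (𝓝 0) := by
  set d := Module.finrank ℝ E
  have hlim : Tendsto (fun x : E => ‖x‖ ^ (-(2 * r - d))) (Bornology.cobounded E) (𝓝 0) :=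
    (tendsto_rpow_neg_atTop (sub_pos.2 hr)).comp tendsto_norm_cobounded_atTop
  refine squeeze_zero' (.of_forall fun x => by positivity) ?_ hlim
  filter_upwards [tendsto_norm_cobounded_atTop.eventually_gt_atTop 0] with x hx
  have hle : (1 + ‖x‖ ^ 2) ^ (-r) ≤ (‖x‖ ^ 2) ^ (-r) :=
    Real.rpow_le_rpow_of_nonpos (by positivity) (by linarith)
      (by linarith [(Nat.cast_nonneg d : (0 : ℝ) ≤ d)])
  calc ‖x‖ ^ d * (1 + ‖x‖ ^ 2) ^ (-r) ≤ ‖x‖ ^ d * (‖x‖ ^ 2) ^ (-r) := by gcongr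
    _ = ‖x‖ ^ (-(2 * r - d)) := by
      rw [← Real.rpow_natCast, ← Real.rpow_natCast, ← Real.rpow_mul hx.le, ← Real.rpow_add hx]
      push_cast
      ring_nf

lemma one_add_norm_sq_rpow_neg_le_one {r : ℝ} (hr : 0 ≤ r)
    (x : E) : (1 + ‖x‖ ^ 2) ^ (-r) ≤ 1 :=
  Real.rpow_le_one_of_one_le_of_nonpos (by linarith [sq_nonneg ‖x‖]) (neg_nonpos.2 hr)

lemma integrable_one_add_norm_smul_sq_rpow_mul [NormedSpace ℝ E] [MeasurableSpace E] [BorelSpace E]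
    {μ : Measure E} {r : ℝ} (hr : 0 ≤ r) {g : E → ℝ} (hg : Integrable g μ)
    (c : ℝ) (n : ℕ) : Integrable (fun x => c ^ n * (1 + ‖c • x‖ ^ 2) ^ (-r) * g x) μ := by
  refine hg.bdd_mul (c := |c| ^ n) (continuous_const.mul
    ((continuous_one_add_norm_sq_rpow _).comp (continuous_const_smul c))).aestronglyMeasurable
    (.of_forall fun x => ?_)
  rw [norm_mul, norm_pow, Real.norm_eq_abs, Real.norm_of_nonneg (by positivity)]
  exact mul_le_of_le_one_right (by positivity) (one_add_norm_sq_rpow_neg_le_one hr _)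

end Weight

section WeightedCauchySchwarz

variable {α E F : Type*} [MeasurableSpace α] {μ : Measure α} [NormedAddCommGroup E]
  [NormedAddCommGroup F] {w : α → ℝ} {f : α → E} {g : α → F}

lemma memLp_two_sqrt_mul_norm (hw : ∀ x, 0 ≤ w x) (hwm : AEStronglyMeasurable w μ)
    (hf : AEStronglyMeasurable f μ) (hwf : Integrable (fun x => w x * ‖f x‖ ^ 2) μ) :
    MemLp (fun x => √(w x) * ‖f x‖) 2 μ := by
  have hmeas : AEStronglyMeasurable (fun x => √(w x) * ‖f x‖) μ :=
    (Real.continuous_sqrt.comp_aestronglyMeasurable hwm).mul hf.norm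
  exact (memLp_two_iff_integrable_sq hmeas).2
    (hwf.congr (.of_forall fun x => by simp only [mul_pow, Real.sq_sqrt (hw x)]))

lemma sqrt_mul_mul_sqrt_inv_mul {w : ℝ} (hw : 0 < w) (a b : ℝ) :
    √w * a * (√w⁻¹ * b) = a * b := by
  rw [Real.sqrt_inv]
  field_simp

lemma integrable_norm_mul_norm_of_weight (hw : ∀ x, 0 < w x) (hwm : AEStronglyMeasurable w μ)
    (hf : AEStronglyMeasurable f μ) (hg : AEStronglyMeasurable g μ)
    (hwf : Integrable (fun x => w x * ‖f x‖ ^ 2) μ)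
    (hwg : Integrable (fun x => (w x)⁻¹ * ‖g x‖ ^ 2) μ) :
    Integrable (fun x => ‖f x‖ * ‖g x‖) μ := by
  have hF := memLp_two_sqrt_mul_norm (fun x => (hw x).le) hwm hf hwf
  have hG := memLp_two_sqrt_mul_norm (fun x => (inv_pos.2 (hw x)).le) hwm.inv₀ hg hwg
  exact (hF.integrable_mul hG).congr
    (.of_forall fun x => sqrt_mul_mul_sqrt_inv_mul (hw x) ‖f x‖ ‖g x‖)

lemma sq_integral_norm_mul_norm_le_of_weight (hw : ∀ x, 0 < w x)
    (hwm : AEStronglyMeasurable w μ) (hf : AEStronglyMeasurable f μ)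
    (hg : AEStronglyMeasurable g μ) (hwf : Integrable (fun x => w x * ‖f x‖ ^ 2) μ)
    (hwg : Integrable (fun x => (w x)⁻¹ * ‖g x‖ ^ 2) μ) :
    (∫ x, ‖f x‖ * ‖g x‖ ∂μ) ^ 2 ≤
      (∫ x, w x * ‖f x‖ ^ 2 ∂μ) * ∫ x, (w x)⁻¹ * ‖g x‖ ^ 2 ∂μ := by
  have hF := memLp_two_sqrt_mul_norm (fun x => (hw x).le) hwm hf hwf
  have hG := memLp_two_sqrt_mul_norm (fun x => (inv_pos.2 (hw x)).le) hwm.inv₀ hg hwg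
  have hCS := integral_mul_le_Lp_mul_Lq_of_nonneg (f := fun x => √(w x) * ‖f x‖)
    (g := fun x => √(w x)⁻¹ * ‖g x‖) Real.HolderConjugate.two_two
    (.of_forall fun x => mul_nonneg (Real.sqrt_nonneg _) (norm_nonneg _))
    (.of_forall fun x => mul_nonneg (Real.sqrt_nonneg _) (norm_nonneg _))
    (by rwa [ENNReal.ofReal_ofNat]) (by rwa [ENNReal.ofReal_ofNat])
  simp only [fun x => sqrt_mul_mul_sqrt_inv_mul (hw x) ‖f x‖ ‖g x‖, Real.rpow_two, mul_pow,
    fun x => Real.sq_sqrt (hw x).le, fun x => Real.sq_sqrt (inv_pos.2 (hw x)).le,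
    ← Real.sqrt_eq_rpow] at hCS
  have hint_nonneg : 0 ≤ ∫ x, w x * ‖f x‖ ^ 2 ∂μ :=
    integral_nonneg fun x => mul_nonneg (hw x).le (sq_nonneg _)
  rw [← Real.sqrt_mul hint_nonneg] at hCS
  refine (Real.le_sqrt (integral_nonneg fun x => by positivity) ?_).1 hCS
  exact mul_nonneg hint_nonneg (integral_nonneg fun x =>
    mul_nonneg (inv_pos.2 (hw x)).le (sq_nonneg _))

end WeightedCauchySchwarz

section Dilation

variable {E G : Type*} [NormedAddCommGroup E] [InnerProductSpace ℝ E] [NormedAddCommGroup G]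
  [NormedSpace ℂ G] {r : ℝ}

/- The Schwartz decay of the kernel is shared between a factor integrable against `f` and an
integrable factor, which is the one that concentrates at `0`. -/
lemma exists_norm_dilate_smul_le (X : 𝓢(E, ℂ)) (hr : 0 ≤ r) :
    ∃ D, ∀ (f : E → G) (c : ℝ), 1 ≤ c → ∀ (n : ℕ) x,
      ‖((c : ℂ) ^ n * X (c • x)) • f x‖ ≤
        D * (c ^ n * (1 + ‖c • x‖ ^ 2) ^ (-r) * ((1 + ‖x‖ ^ 2) ^ (-r) * ‖f x‖)) := by
  obtain ⟨D, hD0, hD⟩ := exists_norm_le_one_add_norm_sq_rpow X (r + r)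
  refine ⟨D, fun f c hc n x => ?_⟩
  have hc0 : 0 ≤ c := zero_le_one.trans hc
  have hsplit : (1 + ‖c • x‖ ^ 2) ^ (-(r + r)) ≤
      (1 + ‖c • x‖ ^ 2) ^ (-r) * (1 + ‖x‖ ^ 2) ^ (-r) := by
    rw [neg_add, Real.rpow_add (by positivity)]
    exact mul_le_mul_of_nonneg_left (one_add_norm_smul_sq_rpow_neg_le hr hc x) (by positivity)
  calc ‖((c : ℂ) ^ n * X (c • x)) • f x‖ = c ^ n * ‖X (c • x)‖ * ‖f x‖ := by
        rw [norm_smul, norm_mul, norm_pow, Complex.norm_of_nonneg hc0]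
    _ ≤ c ^ n * (D * ((1 + ‖c • x‖ ^ 2) ^ (-r) * (1 + ‖x‖ ^ 2) ^ (-r))) * ‖f x‖ := by
        gcongr
        exact (hD _).trans (by gcongr)
    _ = _ := by ring

lemma integrable_dilate_smul [MeasurableSpace E] [BorelSpace E] [SecondCountableTopology E]
    {μ : Measure E} (X : 𝓢(E, ℂ)) (hr : 0 ≤ r) {f : E → G}
    (hf : AEStronglyMeasurable f μ) (hint : Integrable (fun x => (1 + ‖x‖ ^ 2) ^ (-r) * ‖f x‖) μ)
    {c : ℝ} (hc : 1 ≤ c) (n : ℕ) : Integrable (fun x => ((c : ℂ) ^ n * X (c • x)) • f x) μ := by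
  obtain ⟨D, hD⟩ := exists_norm_dilate_smul_le (G := G) X hr
  have hX : Continuous fun x => (c : ℂ) ^ n * X (c • x) :=
    continuous_const.mul (X.continuous.comp (continuous_const_smul c))
  exact ((integrable_one_add_norm_smul_sq_rpow_mul hr hint c n).const_mul D).mono'
    (hX.aestronglyMeasurable.smul hf) (.of_forall (hD f c hc n))

end Dilation

section ApproximateIdentity

variable {E G : Type*} [NormedAddCommGroup E] [InnerProductSpace ℝ E] [FiniteDimensional ℝ E]
  [MeasurableSpace E] [BorelSpace E] {μ : Measure E} [μ.IsAddHaarMeasure]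
  [NormedAddCommGroup G] [NormedSpace ℂ G] {r : ℝ}

lemma integrable_one_add_norm_sq_rpow (hr : (Module.finrank ℝ E : ℝ) < 2 * r) :
    Integrable (fun x : E => (1 + ‖x‖ ^ 2) ^ (-r)) μ := by
  simpa [neg_div] using integrable_rpow_neg_one_add_norm_sq (μ := μ) hr

lemma integrable_weight_inv_mul_norm_sq {F : Type*} [NormedAddCommGroup F] {s C : ℝ}
    (hsr : (Module.finrank ℝ E : ℝ) < 2 * (s + 2 * r)) {g : E → F}
    (hg : AEStronglyMeasurable g μ) (hle : ∀ x, ‖g x‖ ≤ C * (1 + ‖x‖ ^ 2) ^ (-r)) :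
    Integrable (fun x => ((1 + ‖x‖ ^ 2) ^ s)⁻¹ * ‖g x‖ ^ 2) μ := by
  have hw : Continuous fun x : E => ((1 + ‖x‖ ^ 2) ^ s)⁻¹ :=
    (continuous_one_add_norm_sq_rpow s).inv₀ fun x => by positivity
  refine ((integrable_one_add_norm_sq_rpow hsr).const_mul (C ^ 2)).mono'
    (hw.aestronglyMeasurable.mul (hg.norm.pow 2)) (.of_forall fun x => ?_)
  rw [Real.norm_of_nonneg (by positivity)]
  calc ((1 + ‖x‖ ^ 2) ^ s)⁻¹ * ‖g x‖ ^ 2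
      ≤ ((1 + ‖x‖ ^ 2) ^ s)⁻¹ * (C * (1 + ‖x‖ ^ 2) ^ (-r)) ^ 2 := by
        gcongr
        exact hle x
    _ = C ^ 2 * (1 + ‖x‖ ^ 2) ^ (-(s + 2 * r)) := by
        rw [mul_pow, ← Real.rpow_neg (by positivity), ← Real.rpow_mul_natCast (by positivity),
          mul_left_comm, ← Real.rpow_add (by positivity)]
        push_cast
        ring_nf

lemma tendsto_integral_dilate_mul_of_apply_zero {g : E → ℝ}
    (hr : (Module.finrank ℝ E : ℝ) < 2 * r) (hg : Integrable g μ) (hg0 : ContinuousAt g 0)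
    (hzero : g 0 = 0) :
    Tendsto (fun c : ℝ => ∫ x, c ^ Module.finrank ℝ E * (1 + ‖c • x‖ ^ 2) ^ (-r) * g x ∂μ)
      atTop (𝓝 0) := by
  set I := ∫ x : E, (1 + ‖x‖ ^ 2) ^ (-r) ∂μ
  have hI : 0 < I := by
    refine integral_pos_of_integrable_nonneg_nonzero (x := 0) (continuous_one_add_norm_sq_rpow _)
      (integrable_one_add_norm_sq_rpow hr) (fun x => by positivity) (by simp)
  have hlim := tendsto_integral_comp_smul_smul_of_integrable
    (φ := fun x : E => I⁻¹ * (1 + ‖x‖ ^ 2) ^ (-r)) (μ := μ) (fun x => by positivity)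
    (by rw [integral_const_mul]; exact inv_mul_cancel₀ hI.ne')
    (by simpa [mul_left_comm] using
      (tendsto_norm_pow_mul_one_add_norm_sq_rpow hr).const_mul I⁻¹) hg hg0
  rw [hzero] at hlim
  refine (by simpa using hlim.const_mul I : Tendsto _ atTop (𝓝 (0 : ℝ))).congr fun c => ?_
  rw [← integral_const_mul]
  refine integral_congr_ae (.of_forall fun x => ?_)
  simp only
  field_simp

lemma integral_dilate_smul_const [CompleteSpace G] (X : E → ℂ) {c : ℝ} (hc : 0 < c) (y : G) :
    ∫ x, ((c : ℂ) ^ Module.finrank ℝ E * X (c • x)) • y ∂μ = (∫ x, X x ∂μ) • y := by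
  rw [integral_smul_const, integral_const_mul,
    Measure.integral_comp_smul_of_nonneg _ _ _ (hR := hc.le), Complex.real_smul, ← mul_assoc]
  push_cast
  rw [mul_inv_cancel₀ (pow_ne_zero _ (by exact_mod_cast hc.ne')), one_mul]

theorem tendsto_integral_dilate_smul [CompleteSpace G] (X : 𝓢(E, ℂ)) {f : E → G}
    (hr : (Module.finrank ℝ E : ℝ) < 2 * r) (hf : AEStronglyMeasurable f μ)
    (hint : Integrable (fun x => (1 + ‖x‖ ^ 2) ^ (-r) * ‖f x‖) μ) (hf0 : ContinuousAt f 0) :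
    Tendsto (fun c : ℝ => ∫ x, ((c : ℂ) ^ Module.finrank ℝ E * X (c • x)) • f x ∂μ) atTop
      (𝓝 ((∫ x, X x ∂μ) • f 0)) := by
  have hr0 : 0 ≤ r := by linarith [(Nat.cast_nonneg _ : (0 : ℝ) ≤ Module.finrank ℝ E)]
  obtain ⟨D, hD⟩ := exists_norm_dilate_smul_le (G := G) X hr0
  have hg : Integrable (fun x => (1 + ‖x‖ ^ 2) ^ (-r) * ‖f x - f 0‖) μ := by
    refine (hint.add ((integrable_one_add_norm_sq_rpow hr).mul_const ‖f 0‖)).mono'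
      ((continuous_one_add_norm_sq_rpow _).aestronglyMeasurable.mul
        (hf.sub aestronglyMeasurable_const).norm) (.of_forall fun x => ?_)
    rw [Real.norm_of_nonneg (by positivity), Pi.add_apply, ← mul_add]
    gcongr
    exact norm_sub_le _ _
  have hlim := (tendsto_integral_dilate_mul_of_apply_zero hr hg
    ((continuous_one_add_norm_sq_rpow _).continuousAt.mul
      (hf0.sub continuousAt_const).norm) (by simp)).const_mul D
  rw [mul_zero] at hlim
  rw [tendsto_iff_norm_sub_tendsto_zero]
  refine squeeze_zero' (.of_forall fun c => norm_nonneg _) ?_ hlim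
  filter_upwards [eventually_ge_atTop 1] with c hc
  rw [← integral_dilate_smul_const X (zero_lt_one.trans_le hc),
    ← integral_sub (integrable_dilate_smul X hr0 hf hint hc _)
      (integrable_dilate_smul X hr0 aestronglyMeasurable_const
        ((integrable_one_add_norm_sq_rpow hr).mul_const _) hc _), ← integral_const_mul]
  simp only [← smul_sub]
  exact norm_integral_le_of_norm_le
    ((integrable_one_add_norm_smul_sq_rpow_mul hr0 hg c _).const_mul D)
    (.of_forall fun x => hD (fun x => f x - f 0) c hc _ x)

end ApproximateIdentity

section TestFunctions

lemma rdot_eq_inner (x ξ : R2) : rdot x ξ = inner ℝ x ξ := by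
  simp [rdot, PiLp.inner_apply, mul_comm]

lemma testFT_eq_fourierInv (φ : R2 → ℂ) (ξ : R2) : testFT φ ξ = 𝓕⁻ φ ((2 * π)⁻¹ • ξ) := by
  rw [Real.fourierInv_eq']
  refine integral_congr_ae (.of_forall fun x => ?_)
  have hphase : 2 * π * inner ℝ x ((2 * π)⁻¹ • ξ) = rdot x ξ := by
    rw [inner_smul_right, mul_inv_cancel_left₀ (by positivity), rdot_eq_inner]
  simp only [hphase, smul_eq_mul, mul_comm Complex.I]

/-- `testFT φ` as a Schwartz function, for `φ` a Schwartz function: with the normalization of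
Mathlib's Fourier transform, `testFT φ ξ = (𝓕⁻ φ) (ξ / 2π)`. -/
def testFTSchwartz (φ : 𝓢(R2, ℂ)) : 𝓢(R2, ℂ) :=
  SchwartzMap.compCLMOfContinuousLinearEquiv ℂ
    (ContinuousLinearEquiv.smulLeft (Units.mk0 ((2 * π)⁻¹ : ℝ) (by positivity))) (𝓕⁻ φ)

lemma coe_testFTSchwartz (φ : 𝓢(R2, ℂ)) : ⇑(testFTSchwartz φ) = testFT φ := by
  ext ξ
  rw [testFT_eq_fourierInv, ← SchwartzMap.fourierInv_coe]
  rfl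

lemma integral_testFT (φ : 𝓢(R2, ℂ)) : ∫ ξ, testFT φ ξ = (2 * π) ^ 2 * φ 0 := by
  have hinv : ∫ ξ, (𝓕⁻ φ : 𝓢(R2, ℂ)) ξ = φ 0 := by
    have h : 𝓕 (𝓕⁻ φ : 𝓢(R2, ℂ)) 0 = φ 0 := by rw [FourierTransform.fourier_fourierInv_eq]
    rw [SchwartzMap.fourier_coe, Real.fourier_eq'] at h
    simpa using h
  simp only [testFT_eq_fourierInv, ← SchwartzMap.fourierInv_coe]
  rw [Measure.integral_comp_smul_of_nonneg _ _ _ (hR := by positivity), hinv,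
    finrank_euclideanSpace_fin, Complex.real_smul, inv_pow, inv_inv]
  push_cast
  rfl

lemma testFT_comp_inv_smul (φ : R2 → ℂ) {c : ℝ} (hc : 0 < c) (ξ : R2) :
    testFT (fun x => φ (c⁻¹ • x)) ξ = c ^ 2 * testFT φ (c • ξ) := by
  have hphase (x : R2) : rdot x ξ = rdot (c⁻¹ • x) (c • ξ) := by
    simp only [rdot_eq_inner, inner_smul_left, inner_smul_right]
    simp [hc.ne']
  have h := Measure.integral_comp_smul_of_nonneg (volume : Measure R2)
    (fun x => Complex.exp (Complex.I * (rdot x (c • ξ) : ℂ)) * φ x) c⁻¹ (hR := by positivity)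
  simp only [testFT, hphase _]
  rw [h]
  simp

lemma testFT_exp_mul (φ : R2 → ℂ) (ξ₀ ξ : R2) :
    testFT (fun x => Complex.exp (Complex.I * (rdot x ξ₀ : ℂ)) * φ x) ξ = testFT φ (ξ + ξ₀) := by
  simp only [testFT, rdot_eq_inner, inner_add_right, Complex.ofReal_add, mul_add, Complex.exp_add,
    mul_assoc]

lemma testFT_sub {φ ψ : R2 → ℂ} (hφ : Integrable φ) (hψ : Integrable ψ) (ξ : R2) :
    testFT (fun x => φ x - ψ x) ξ = testFT φ ξ - testFT ψ ξ := by
  have hexp {f : R2 → ℂ} (hf : Integrable f) :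
      Integrable fun x => Complex.exp (Complex.I * (rdot x ξ : ℂ)) * f x := by
    have hcont : Continuous fun x => Complex.exp (Complex.I * (rdot x ξ : ℂ)) := by
      unfold rdot; fun_prop
    refine hf.bdd_mul (c := 1) hcont.aestronglyMeasurable (.of_forall fun x => ?_)
    rw [mul_comm, Complex.norm_exp_ofReal_mul_I]
  simp only [testFT, mul_sub]
  exact integral_sub (hexp hφ) (hexp hψ)

lemma exists_schwartzMap_eq_one_on_closedBall {E : Type*} [NormedAddCommGroup E]
    [InnerProductSpace ℝ E] [FiniteDimensional ℝ E] {R : ℝ} (hR : 0 < R) :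
    ∃ χ : 𝓢(E, ℂ), HasCompactSupport χ ∧ ∀ x, ‖x‖ ≤ R → χ x = 1 := by
  let b : ContDiffBump (0 : E) := ⟨R, R + 1, hR, by linarith⟩
  have hsupp : HasCompactSupport fun x => ((b x : ℝ) : ℂ) :=
    b.hasCompactSupport.comp_left (g := fun r : ℝ => (r : ℂ)) Complex.ofReal_zero
  refine ⟨hsupp.toSchwartzMap (Complex.ofRealCLM.contDiff.comp b.contDiff), hsupp, fun x hx => ?_⟩
  change ((b x : ℝ) : ℂ) = 1
  rw [b.one_of_mem_closedBall (mem_closedBall_zero_iff.2 hx), Complex.ofReal_one]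

end TestFunctions

lemma finrank_lt_two_mul_add (s : ℝ) :
    (Module.finrank ℝ R2 : ℝ) < 2 * (s + 2 * (|s| + 2)) := by
  rw [finrank_euclideanSpace_fin]
  push_cast
  linarith [neg_abs_le s, abs_nonneg s]

namespace HTildeElt

variable {s : ℝ} {Γ : Set R2} (u : HTildeElt s Γ)

lemma weight_mul_norm_ft_sq_le (ξ₀ ξ : R2) :
    (1 + ‖ξ‖ ^ 2) ^ s * ‖u.ft (ξ + ξ₀)‖ ^ 2 ≤
      (2 * (1 + ‖ξ₀‖ ^ 2)) ^ |s| * ((1 + ‖ξ + ξ₀‖ ^ 2) ^ s * ‖u.ft (ξ + ξ₀)‖ ^ 2) := by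
  have hpeetre := one_add_norm_add_sq_rpow_le s (ξ + ξ₀) (-ξ₀)
  rw [add_neg_cancel_right, norm_neg] at hpeetre
  rw [← mul_assoc]
  gcongr

lemma integral_ft_add_mul_testFT (ξ₀ : R2) (φ : R2 → ℂ) :
    ∫ ξ, u.ft (ξ + ξ₀) * testFT φ ξ =
      ∫ ξ, u.ft ξ * testFT (fun x => Complex.exp (Complex.I * (rdot x (-ξ₀) : ℂ)) * φ x) ξ := by
  simp only [testFT_exp_mul]
  rw [← integral_add_right_eq_self (fun ξ => u.ft ξ * testFT φ (ξ + -ξ₀)) ξ₀]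
  simp only [add_neg_cancel_right]

/-- Multiplication of a distribution by the character `x ↦ exp (-i x·ξ₀)`, which translates its
Fourier transform by `ξ₀`. -/
def modulate (ξ₀ : R2) : HTildeElt s Γ where
  ft ξ := u.ft (ξ + ξ₀)
  cont := u.cont.comp (continuous_add_const ξ₀)
  mem := by
    refine ((u.mem.comp_add_right ξ₀).const_mul ((2 * (1 + ‖ξ₀‖ ^ 2)) ^ |s|)).mono' ?_
      (.of_forall fun ξ => ?_)
    · exact ((continuous_one_add_norm_sq_rpow s).mul
        ((u.cont.comp (continuous_add_const ξ₀)).norm.pow 2)).aestronglyMeasurable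
    · rw [Real.norm_of_nonneg (by positivity)]
      exact u.weight_mul_norm_ft_sq_le ξ₀ ξ
  supp φ hφ hφc hφΓ := by
    have hexp : ContDiff ℝ ∞ fun x : R2 => Complex.exp (Complex.I * (rdot x (-ξ₀) : ℂ)) := by
      have hrdot : ContDiff ℝ ∞ fun x : R2 => rdot x (-ξ₀) := by
        unfold rdot
        fun_prop
      exact (contDiff_const.mul (Complex.ofRealCLM.contDiff.comp hrdot)).cexp
    rw [u.integral_ft_add_mul_testFT]
    exact u.supp _ (hexp.mul hφ) hφc.mul_left
      (Set.subset_eq_empty (Set.inter_subset_inter_left _ (tsupport_mul_subset_right)) hφΓ)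

lemma modulate_ft_zero (ξ₀ : R2) : (u.modulate ξ₀).ft 0 = u.ft ξ₀ := congrArg u.ft (zero_add ξ₀)

lemma wnormSq_modulate_le (ξ₀ : R2) :
    wnormSq s (u.modulate ξ₀).ft ≤ (2 * (1 + ‖ξ₀‖ ^ 2)) ^ |s| * wnormSq s u.ft := by
  have hint := integral_mono (u.modulate ξ₀).mem ((u.mem.comp_add_right ξ₀).const_mul _)
    (u.weight_mul_norm_ft_sq_le ξ₀)
  rw [integral_const_mul, integral_add_right_eq_self
    (fun ξ => (1 + ‖ξ‖ ^ 2) ^ s * ‖u.ft ξ‖ ^ 2)] at hint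
  rw [wnormSq, wnormSq, mul_left_comm]
  gcongr

lemma integrable_weight_mul_norm :
    Integrable fun ξ => (1 + ‖ξ‖ ^ 2) ^ (-(|s| + 2)) * ‖u.ft ξ‖ := by
  have hw : Continuous fun ξ : R2 => (1 + ‖ξ‖ ^ 2) ^ (-(|s| + 2)) :=
    continuous_one_add_norm_sq_rpow _
  have hsr := finrank_lt_two_mul_add s
  have hsq := integrable_weight_inv_mul_norm_sq (μ := volume) (C := 1) hsr hw.aestronglyMeasurable
    fun ξ => by rw [Real.norm_of_nonneg (by positivity), one_mul]
  refine (integrable_norm_mul_norm_of_weight (fun ξ => by positivity)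
    (continuous_one_add_norm_sq_rpow s).aestronglyMeasurable u.cont.aestronglyMeasurable
    hw.aestronglyMeasurable u.mem hsq).congr (.of_forall fun ξ => ?_)
  simp only [Real.norm_of_nonneg (by positivity : 0 ≤ (1 + ‖ξ‖ ^ 2) ^ (-(|s| + 2))), mul_comm]

lemma integral_testFT_dilate_mul_ft {R : ℝ} (hΓ : closure Γ ⊆ Metric.ball 0 R) {χ : 𝓢(R2, ℂ)}
    (hχc : HasCompactSupport χ) (hχ : ∀ x, ‖x‖ ≤ R → χ x = 1) {c : ℝ} (hc : 1 ≤ c) :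
    ∫ ξ, (c ^ 2 * testFT χ (c • ξ)) * u.ft ξ = ∫ ξ, testFT χ ξ * u.ft ξ := by
  have hc0 : 0 < c := zero_lt_one.trans_le hc
  have hr : 0 ≤ |s| + 2 := by positivity
  have hint {b : ℝ} (hb : 1 ≤ b) : Integrable fun ξ => (b ^ 2 * testFT χ (b • ξ)) * u.ft ξ := by
    simpa only [coe_testFTSchwartz, smul_eq_mul] using integrable_dilate_smul (testFTSchwartz χ) hr
      u.cont.aestronglyMeasurable u.integrable_weight_mul_norm hb 2
  set φ : R2 → ℂ := fun x => χ (c⁻¹ • x) - χ x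
  have hφ : ContDiff ℝ ∞ φ := ((χ.smooth _).comp (contDiff_const_smul _)).sub (χ.smooth _)
  have hφc : HasCompactSupport φ := (hχc.comp_smul (inv_ne_zero hc0.ne')).sub hχc
  have hφ_ball : Set.EqOn φ 0 (Metric.ball 0 R) := fun x hx => by
    have hxR : ‖x‖ ≤ R := (mem_ball_zero_iff.1 hx).le
    have hcx : ‖c⁻¹ • x‖ ≤ R := by
      rw [norm_smul, norm_inv, Real.norm_of_nonneg hc0.le]
      exact (mul_le_of_le_one_left (norm_nonneg x) (inv_le_one_of_one_le₀ hc)).trans hxR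
    simp only [φ, hχ x hxR, hχ _ hcx, sub_self, Pi.zero_apply]
  have hφΓ : tsupport φ ∩ closure Γ = ∅ := by
    have hsub : tsupport φ ⊆ (Metric.ball 0 R)ᶜ :=
      closure_minimal (fun x hx hxR => hx (hφ_ball hxR)) Metric.isOpen_ball.isClosed_compl
    exact (Set.disjoint_of_subset_left hsub
      (Set.disjoint_compl_left_iff_subset.2 hΓ)).inter_eq
  have hφFT (ξ : R2) : u.ft ξ * testFT φ ξ =
      (c ^ 2 * testFT χ (c • ξ)) * u.ft ξ - testFT χ ξ * u.ft ξ := by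
    rw [testFT_sub (χ.integrable.comp_smul (inv_ne_zero hc0.ne')) χ.integrable,
      testFT_comp_inv_smul χ hc0]
    ring
  have hzero := u.supp φ hφ hφc hφΓ
  simp only [hφFT] at hzero
  rwa [integral_sub (hint hc) (by simpa using hint le_rfl), sub_eq_zero] at hzero

theorem integral_testFT_mul_ft {R : ℝ} (hR : 0 ≤ R) (hΓ : closure Γ ⊆ Metric.ball 0 R)
    {χ : 𝓢(R2, ℂ)} (hχc : HasCompactSupport χ) (hχ : ∀ x, ‖x‖ ≤ R → χ x = 1) :
    ∫ ξ, testFT χ ξ * u.ft ξ = (2 * π) ^ 2 * u.ft 0 := by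
  have hr : (Module.finrank ℝ R2 : ℝ) < 2 * (|s| + 2) := by
    rw [finrank_euclideanSpace_fin]
    push_cast
    linarith [abs_nonneg s]
  have hlim := tendsto_integral_dilate_smul (testFTSchwartz χ) hr u.cont.aestronglyMeasurable
    u.integrable_weight_mul_norm u.cont.continuousAt
  simp only [coe_testFTSchwartz, integral_testFT, hχ 0 (by simpa using hR), smul_eq_mul,
    mul_one, finrank_euclideanSpace_fin] at hlim
  refine tendsto_nhds_unique (tendsto_const_nhds.congr' ?_) hlim
  filter_upwards [eventually_ge_atTop 1] with c hc
  exact (u.integral_testFT_dilate_mul_ft hΓ hχc hχ hc).symm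

lemma integral_weight_mul_norm_sq :
    ∫ ξ, (1 + ‖ξ‖ ^ 2) ^ s * ‖u.ft ξ‖ ^ 2 = (2 * π) ^ 2 * wnormSq s u.ft := by
  rw [wnormSq, mul_inv_cancel_left₀ (by positivity)]

end HTildeElt

theorem exists_norm_ft_zero_sq_le (s : ℝ) {Γ : Set R2} (hΓ : Bornology.IsBounded Γ) :
    ∃ C, 0 ≤ C ∧ ∀ u : HTildeElt s Γ, ‖u.ft 0‖ ^ 2 ≤ C * wnormSq s u.ft := by
  obtain ⟨R, hR, hΓR⟩ := hΓ.closure.subset_ball_lt 0 0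
  obtain ⟨χ, hχc, hχ⟩ := exists_schwartzMap_eq_one_on_closedBall (E := R2) hR
  set X := testFTSchwartz χ
  have hsr := finrank_lt_two_mul_add s
  obtain ⟨D, -, hD⟩ := exists_norm_le_one_add_norm_sq_rpow X (|s| + 2)
  have hXint := integrable_weight_inv_mul_norm_sq (μ := volume) hsr
    X.continuous.aestronglyMeasurable hD
  set K := ∫ ξ, ((1 + ‖ξ‖ ^ 2) ^ s)⁻¹ * ‖X ξ‖ ^ 2
  refine ⟨((2 * π) ^ 2)⁻¹ * K, mul_nonneg (by positivity)
    (integral_nonneg fun ξ => by positivity), fun u => ?_⟩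
  have hCS := sq_integral_norm_mul_norm_le_of_weight (fun ξ => by positivity)
    (continuous_one_add_norm_sq_rpow s).aestronglyMeasurable u.cont.aestronglyMeasurable
    X.continuous.aestronglyMeasurable u.mem hXint
  rw [u.integral_weight_mul_norm_sq] at hCS
  have hzero : (2 * π) ^ 2 * ‖u.ft 0‖ ≤ ∫ ξ, ‖u.ft ξ‖ * ‖X ξ‖ :=
    calc (2 * π) ^ 2 * ‖u.ft 0‖ = ‖((2 * π) ^ 2 : ℂ) * u.ft 0‖ := by
          rw [norm_mul, norm_pow, norm_mul, Complex.norm_ofNat,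
            Complex.norm_of_nonneg Real.pi_pos.le]
      _ = ‖∫ ξ, X ξ * u.ft ξ‖ := by
          rw [coe_testFTSchwartz, u.integral_testFT_mul_ft hR.le hΓR hχc hχ]
      _ ≤ ∫ ξ, ‖u.ft ξ‖ * ‖X ξ‖ := by
          simpa only [norm_mul, mul_comm] using norm_integral_le_integral_norm fun ξ => X ξ * u.ft ξ
  rw [mul_assoc, inv_mul_eq_div, le_div_iff₀ (by positivity)]
  refine le_of_mul_le_mul_left ?_ (by positivity : 0 < (2 * π) ^ 2)
  calc (2 * π) ^ 2 * (‖u.ft 0‖ ^ 2 * (2 * π) ^ 2) = ((2 * π) ^ 2 * ‖u.ft 0‖) ^ 2 := by ring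
    _ ≤ (∫ ξ, ‖u.ft ξ‖ * ‖X ξ‖) ^ 2 := by gcongr
    _ ≤ (2 * π) ^ 2 * wnormSq s u.ft * K := hCS
    _ = (2 * π) ^ 2 * (K * wnormSq s u.ft) := by ring

theorem exists_norm_ft_sq_le (s : ℝ) {Γ : Set R2} (hΓ : Bornology.IsBounded Γ) :
    ∃ C, 0 ≤ C ∧ ∀ (u : HTildeElt s Γ) ξ,
      ‖u.ft ξ‖ ^ 2 ≤ C * (1 + ‖ξ‖ ^ 2) ^ |s| * wnormSq s u.ft := by
  obtain ⟨C, hC0, hC⟩ := exists_norm_ft_zero_sq_le s hΓ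
  refine ⟨C * 2 ^ |s|, by positivity, fun u ξ => ?_⟩
  calc ‖u.ft ξ‖ ^ 2 = ‖(u.modulate ξ).ft 0‖ ^ 2 := by rw [u.modulate_ft_zero]
    _ ≤ C * wnormSq s (u.modulate ξ).ft := hC _
    _ ≤ C * ((2 * (1 + ‖ξ‖ ^ 2)) ^ |s| * wnormSq s u.ft) := by
      gcongr
      exact u.wnormSq_modulate_le ξ
    _ = _ := by
      rw [Real.mul_rpow (by positivity) (by positivity)]
      ring

section Multiplier

variable {k : ℝ}

lemma norm_g0hat (hk : 0 ≤ k) (ξ : R2) : ‖g0hat k ξ‖ = (√|‖ξ‖ ^ 2 - k ^ 2|)⁻¹ := by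
  unfold g0hat
  split_ifs with h
  · have hlt : ‖ξ‖ ^ 2 < k ^ 2 := by gcongr
    rw [abs_of_neg (sub_neg.2 hlt), neg_sub, norm_div, Complex.norm_I,
      Complex.norm_of_nonneg (Real.sqrt_nonneg _), one_div]
  · have hle : k ^ 2 ≤ ‖ξ‖ ^ 2 := by gcongr; exact not_lt.1 h
    rw [abs_of_nonneg (sub_nonneg.2 hle), norm_div, norm_one,
      Complex.norm_of_nonneg (Real.sqrt_nonneg _), one_div]

lemma measurable_g0hat (k : ℝ) : Measurable (g0hat k) := by
  unfold g0hat
  exact Measurable.ite (measurableSet_lt (by fun_prop) (by fun_prop)) (by fun_prop) (by fun_prop)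

lemma intervalIntegrable_abs_sub_rpow {r : ℝ} (hr : -1 < r) (a b c : ℝ) :
    IntervalIntegrable (fun y => |y - c| ^ r) volume a b := by
  have habs : IntervalIntegrable (fun y => |y| ^ r) volume (a - c) (b - c) := by
    refine intervalIntegrable_of_even (fun y => by rw [abs_neg]) (fun x hx => ?_)
    refine (intervalIntegral.intervalIntegrable_rpow' hr).congr fun y hy => ?_
    rw [Set.uIoc_of_le hx.le] at hy
    simp only [abs_of_pos hy.1]
  simpa only [sub_add_cancel] using habs.comp_sub_right c

lemma mul_inv_sqrt_abs_sq_sub_sq_le (hk : 0 ≤ k) {y : ℝ} (hy : 0 < y) :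
    y * (√|y ^ 2 - k ^ 2|)⁻¹ ≤ √y * |y - k| ^ (-(1 / 2) : ℝ) := by
  have hfactor : |y ^ 2 - k ^ 2| = (y + k) * |y - k| := by
    rw [sq_sub_sq, abs_mul, abs_of_pos (by positivity)]
  rw [hfactor, Real.sqrt_mul (by positivity), mul_inv, Real.rpow_neg (abs_nonneg _),
    ← Real.sqrt_eq_rpow, ← mul_assoc]
  gcongr
  rw [← div_eq_mul_inv, div_le_iff₀ (by positivity), ← Real.sqrt_mul hy.le]
  exact Real.le_sqrt_of_sq_le (by nlinarith)

/- In polar coordinates the singularity on the circle `‖ξ‖ = k` is of type `|r - k| ^ (-1/2)`. -/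
lemma locallyIntegrable_g0hat (hk : 0 ≤ k) : LocallyIntegrable (g0hat k) := by
  refine fun x => ⟨Metric.ball 0 (‖x‖ + 1), Metric.isOpen_ball.mem_nhds (by simp), ?_⟩
  refine (integrable_norm_iff (measurable_g0hat k).aestronglyMeasurable).1 ?_
  simp only [norm_g0hat hk]
  rw [← IntegrableOn, integrableOn_fun_norm_addHaar volume (f := fun y : ℝ => (√|y ^ 2 - k ^ 2|)⁻¹),
    finrank_euclideanSpace_fin]
  have hdom := (intervalIntegrable_abs_sub_rpow (r := -(1 / 2)) (by norm_num) 0 (‖x‖ + 1)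
    k).continuousOn_mul Real.continuous_sqrt.continuousOn
  rw [intervalIntegrable_iff_integrableOn_Ioo_of_le (by positivity)] at hdom
  refine hdom.mono' (Measurable.aestronglyMeasurable (by fun_prop)) ?_
  filter_upwards [ae_restrict_mem measurableSet_Ioo] with y hy
  rw [pow_one, smul_eq_mul, Real.norm_of_nonneg (mul_nonneg hy.1.le (by positivity))]
  exact mul_inv_sqrt_abs_sq_sub_sq_le hk hy.1

lemma one_add_norm_sq_rpow_neg_half (ξ : R2) :
    (1 + ‖ξ‖ ^ 2) ^ (-(1 / 2) : ℝ) = (√(1 + ‖ξ‖ ^ 2))⁻¹ := by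
  rw [Real.rpow_neg (by positivity), ← Real.sqrt_eq_rpow]

lemma norm_g0hat_le (hk : 0 ≤ k) {ξ : R2} (hξ : 1 + 2 * k ≤ ‖ξ‖) :
    ‖g0hat k ξ‖ ≤ 2 * (1 + ‖ξ‖ ^ 2) ^ (-(1 / 2) : ℝ) := by
  have hsq : 1 + ‖ξ‖ ^ 2 ≤ 2 ^ 2 * (‖ξ‖ ^ 2 - k ^ 2) := by nlinarith
  have hpos : 0 < ‖ξ‖ ^ 2 - k ^ 2 := by nlinarith [sq_nonneg ‖ξ‖]
  have hsqrt : √(1 + ‖ξ‖ ^ 2) ≤ 2 * √(‖ξ‖ ^ 2 - k ^ 2) := by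
    simpa [Real.sqrt_mul] using Real.sqrt_le_sqrt hsq
  rw [norm_g0hat hk, one_add_norm_sq_rpow_neg_half, abs_of_pos hpos, ← div_eq_mul_inv,
    inv_le_comm₀ (by positivity) (by positivity), inv_div, div_le_iff₀ two_pos, mul_comm]
  exact hsqrt

lemma norm_g0hat_mul_norm_sq_le (hk : 0 ≤ k) (F : R2 → ℂ) (ξ : R2) :
    ‖g0hat k ξ‖ * ‖F ξ‖ ^ 2 ≤
      (Metric.closedBall 0 (1 + 2 * k)).indicator (fun η => ‖g0hat k η‖ * ‖F η‖ ^ 2) ξ +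
        2 * ((1 + ‖ξ‖ ^ 2) ^ (-(1 / 2) : ℝ) * ‖F ξ‖ ^ 2) := by
  by_cases hξ : ξ ∈ Metric.closedBall 0 (1 + 2 * k)
  · rw [Set.indicator_of_mem hξ]
    exact le_add_of_nonneg_right (by positivity)
  · rw [Set.indicator_of_notMem hξ, zero_add, ← mul_assoc]
    gcongr
    exact norm_g0hat_le hk (not_le.1 (mt mem_closedBall_zero_iff.2 hξ)).le

lemma integrableOn_norm_g0hat_mul_norm_sq (hk : 0 ≤ k) {F : R2 → ℂ} (hF : Continuous F) (R : ℝ) :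
    IntegrableOn (fun ξ => ‖g0hat k ξ‖ * ‖F ξ‖ ^ 2) (Metric.closedBall 0 R) :=
  have hK := isCompact_closedBall (0 : R2) R
  IntegrableOn.mul_continuousOn ((locallyIntegrable_g0hat hk).integrableOn_isCompact hK).norm
    (hF.norm.pow 2).continuousOn hK

lemma integrable_norm_g0hat_mul_norm_sq (hk : 0 ≤ k) {F : R2 → ℂ} (hF : Continuous F)
    (hint : Integrable fun ξ : R2 => (1 + ‖ξ‖ ^ 2) ^ (-(1 / 2) : ℝ) * ‖F ξ‖ ^ 2) :
    Integrable fun ξ => ‖g0hat k ξ‖ * ‖F ξ‖ ^ 2 := by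
  refine (((integrableOn_norm_g0hat_mul_norm_sq hk hF (1 + 2 * k)).integrable_indicator
    measurableSet_closedBall).add (hint.const_mul 2)).mono'
    ((measurable_g0hat k).norm.mul (hF.norm.pow 2).measurable).aestronglyMeasurable
    (.of_forall fun ξ => ?_)
  rw [Real.norm_of_nonneg (by positivity)]
  exact norm_g0hat_mul_norm_sq_le hk F ξ

theorem exists_integral_norm_g0hat_mul_ft_sq_le (hk : 0 ≤ k) {Γ : Set R2}
    (hΓ : Bornology.IsBounded Γ) :
    ∃ C, 0 ≤ C ∧ ∀ u : HTildeElt (-(1 / 2)) Γ,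
      ∫ ξ, ‖g0hat k ξ‖ * ‖u.ft ξ‖ ^ 2 ≤ C * wnormSq (-(1 / 2)) u.ft := by
  obtain ⟨C, hC0, hC⟩ := exists_norm_ft_sq_le (-(1 / 2)) hΓ
  set R := 1 + 2 * k
  set K : Set R2 := Metric.closedBall 0 R
  set M := C * (1 + R ^ 2) ^ |(-(1 / 2) : ℝ)|
  have hM : 0 ≤ M := by positivity
  have hg := ((locallyIntegrable_g0hat hk).integrableOn_isCompact (isCompact_closedBall 0 R)).norm
  refine ⟨(∫ ξ in K, ‖g0hat k ξ‖) * M + 2 * (2 * π) ^ 2,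
    add_nonneg (mul_nonneg (by positivity) hM) (by positivity), fun u => ?_⟩
  have hN : 0 ≤ wnormSq (-(1 / 2)) u.ft :=
    mul_nonneg (by positivity) (integral_nonneg fun ξ => by positivity)
  have hgu := integrableOn_norm_g0hat_mul_norm_sq hk u.cont R
  have hball : ∫ ξ in K, ‖g0hat k ξ‖ * ‖u.ft ξ‖ ^ 2 ≤
      (∫ ξ in K, ‖g0hat k ξ‖) * (M * wnormSq (-(1 / 2)) u.ft) := by
    rw [← integral_mul_const]
    refine setIntegral_mono_on hgu (hg.mul_const _) measurableSet_closedBall fun ξ hξ => ?_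
    have hξR : ‖ξ‖ ≤ R := mem_closedBall_zero_iff.1 hξ
    gcongr
    refine (hC u ξ).trans (mul_le_mul_of_nonneg_right ?_ hN)
    simp only [M]
    gcongr
  calc ∫ ξ, ‖g0hat k ξ‖ * ‖u.ft ξ‖ ^ 2
      ≤ ∫ ξ, (K.indicator (fun η => ‖g0hat k η‖ * ‖u.ft η‖ ^ 2) ξ +
          2 * ((1 + ‖ξ‖ ^ 2) ^ (-(1 / 2) : ℝ) * ‖u.ft ξ‖ ^ 2)) :=
        integral_mono (integrable_norm_g0hat_mul_norm_sq hk u.cont u.mem)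
          ((hgu.integrable_indicator measurableSet_closedBall).add (u.mem.const_mul 2))
          (norm_g0hat_mul_norm_sq_le hk u.ft)
    _ = (∫ ξ in K, ‖g0hat k ξ‖ * ‖u.ft ξ‖ ^ 2) + 2 * ((2 * π) ^ 2 * wnormSq (-(1 / 2)) u.ft) := by
        rw [integral_add (hgu.integrable_indicator measurableSet_closedBall)
          (u.mem.const_mul 2), integral_indicator measurableSet_closedBall, integral_const_mul,
          u.integral_weight_mul_norm_sq]
    _ ≤ ((∫ ξ in K, ‖g0hat k ξ‖) * M + 2 * (2 * π) ^ 2) * wnormSq (-(1 / 2)) u.ft := by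
        linarith

end Multiplier

section Symbol

variable (k : ℝ) (F1 F2 : R2 → ℂ)

lemma norm_dotFt_sq_add_norm_curlFt_sq (ξ : R2) :
    ‖dotFt F1 F2 ξ‖ ^ 2 + ‖curlFt F1 F2 ξ‖ ^ 2 = ‖ξ‖ ^ 2 * (‖F1 ξ‖ ^ 2 + ‖F2 ξ‖ ^ 2) := by
  simp only [dotFt, curlFt, EuclideanSpace.real_norm_sq_eq, Fin.sum_univ_two,
    ← Complex.normSq_eq_norm_sq, Complex.normSq_apply, Complex.add_re, Complex.add_im,
    Complex.sub_re, Complex.sub_im, Complex.re_ofReal_mul, Complex.im_ofReal_mul]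
  ring

lemma Bintegrand_self {ξ : R2} (hξ : ξ ≠ 0) :
    Bintegrand k F1 F2 F1 F2 ξ =
      g0hat k ξ * ((‖dotFt F1 F2 ξ‖ ^ 2 - k ^ 2 * (‖F1 ξ‖ ^ 2 + ‖F2 ξ‖ ^ 2) : ℝ) : ℂ) := by
  have hξ' : ‖ξ‖ ^ 2 ≠ 0 := by positivity
  have hsymbol : (‖ξ‖ ^ 2 - k ^ 2) * ‖dotFt F1 F2 ξ‖ ^ 2 - k ^ 2 * ‖curlFt F1 F2 ξ‖ ^ 2 =
      (‖dotFt F1 F2 ξ‖ ^ 2 - k ^ 2 * (‖F1 ξ‖ ^ 2 + ‖F2 ξ‖ ^ 2)) * ‖ξ‖ ^ 2 := by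
    linear_combination -k ^ 2 * norm_dotFt_sq_add_norm_curlFt_sq F1 F2 ξ
  rw [Bintegrand, Complex.mul_conj, Complex.mul_conj, Complex.normSq_eq_norm_sq,
    Complex.normSq_eq_norm_sq, ← Complex.ofReal_mul, ← Complex.ofReal_mul, ← Complex.ofReal_sub,
    hsymbol, mul_div_assoc, ← Complex.ofReal_div, mul_div_cancel_right₀ _ hξ']

variable {k F1 F2}

lemma g0hat_re_of_le {ξ : R2} (hξ : ‖ξ‖ ≤ k) : (g0hat k ξ).re = 0 := by
  unfold g0hat
  split_ifs with h
  · rw [Complex.div_ofReal_re, Complex.I_re, zero_div]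
  · simp [hξ.antisymm (not_lt.1 h)]

lemma g0hat_re_of_lt (hk : 0 ≤ k) {ξ : R2} (hξ : k < ‖ξ‖) : (g0hat k ξ).re = ‖g0hat k ξ‖ := by
  have hpos : k ^ 2 < ‖ξ‖ ^ 2 := by gcongr
  rw [norm_g0hat hk, abs_of_pos (sub_pos.2 hpos), g0hat, if_neg hξ.not_gt, ← Complex.ofReal_one,
    ← Complex.ofReal_div, Complex.ofReal_re, one_div]

lemma le_norm_g0hat_of_lt (hk : 0 ≤ k) {ξ : R2} (hξ : k < ‖ξ‖) :
    (1 + ‖ξ‖ ^ 2) ^ (-(1 / 2) : ℝ) ≤ ‖g0hat k ξ‖ := by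
  have hpos : 0 < ‖ξ‖ ^ 2 - k ^ 2 := sub_pos.2 (by gcongr)
  rw [norm_g0hat hk, one_add_norm_sq_rpow_neg_half, abs_of_pos hpos]
  gcongr
  linarith [sq_nonneg k]

lemma le_g0hat_re_mul (hk : 0 ≤ k) (F1 F2 : R2 → ℂ) (ξ : R2) :
    (1 + ‖ξ‖ ^ 2) ^ (-(1 / 2) : ℝ) * ‖dotFt F1 F2 ξ‖ ^ 2 -
        k ^ 2 * ((1 + ‖ξ‖ ^ 2) ^ (-(1 / 2) : ℝ) * (‖F1 ξ‖ ^ 2 + ‖F2 ξ‖ ^ 2) +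
          ‖g0hat k ξ‖ * (‖F1 ξ‖ ^ 2 + ‖F2 ξ‖ ^ 2)) ≤
      (g0hat k ξ).re * (‖dotFt F1 F2 ξ‖ ^ 2 - k ^ 2 * (‖F1 ξ‖ ^ 2 + ‖F2 ξ‖ ^ 2)) := by
  set w := (1 + ‖ξ‖ ^ 2) ^ (-(1 / 2) : ℝ)
  set d := ‖dotFt F1 F2 ξ‖ ^ 2
  set P := ‖F1 ξ‖ ^ 2 + ‖F2 ξ‖ ^ 2
  have hw : 0 ≤ w := by positivity
  have hP : 0 ≤ P := by positivity
  obtain hξ | hξ := le_or_gt ‖ξ‖ k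
  · have hd : d ≤ k ^ 2 * P :=
      calc d ≤ ‖ξ‖ ^ 2 * P := by
            rw [← norm_dotFt_sq_add_norm_curlFt_sq]
            exact le_add_of_nonneg_right (by positivity)
        _ ≤ k ^ 2 * P := by gcongr
    have hg : 0 ≤ k ^ 2 * (‖g0hat k ξ‖ * P) :=
      mul_nonneg (sq_nonneg k) (mul_nonneg (norm_nonneg _) hP)
    rw [g0hat_re_of_le hξ, zero_mul]
    linarith [mul_le_mul_of_nonneg_left hd hw]
  · have hwd : w * d ≤ ‖g0hat k ξ‖ * d := by gcongr; exact le_norm_g0hat_of_lt hk hξ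
    have hwP : 0 ≤ k ^ 2 * (w * P) := by positivity
    rw [g0hat_re_of_lt hk hξ]
    linarith

end Symbol

namespace Xelt

variable {k : ℝ} {Γ : Set R2} (U : Xelt Γ)

lemma continuous_dotFt : Continuous (dotFt U.c1.ft U.c2.ft) := by
  have h1 := U.c1.cont
  have h2 := U.c2.cont
  unfold dotFt
  fun_prop

lemma norm_divFt (ξ : R2) : ‖divFt U ξ‖ = ‖dotFt U.c1.ft U.c2.ft ξ‖ := by
  rw [divFt, norm_mul, Complex.norm_I, one_mul]

lemma integrable_weight_mul_sq :
    Integrable fun ξ : R2 => (1 + ‖ξ‖ ^ 2) ^ (-(1 / 2) : ℝ) *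
      (‖U.c1.ft ξ‖ ^ 2 + ‖U.c2.ft ξ‖ ^ 2) := by
  simp only [mul_add]
  exact U.c1.mem.add U.c2.mem

lemma integrable_norm_g0hat_mul_sq (hk : 0 ≤ k) :
    Integrable fun ξ => ‖g0hat k ξ‖ * (‖U.c1.ft ξ‖ ^ 2 + ‖U.c2.ft ξ‖ ^ 2) := by
  simp only [mul_add]
  exact (integrable_norm_g0hat_mul_norm_sq hk U.c1.cont U.c1.mem).add
    (integrable_norm_g0hat_mul_norm_sq hk U.c2.cont U.c2.mem)

lemma integral_weight_mul_sq :
    ∫ ξ : R2, (1 + ‖ξ‖ ^ 2) ^ (-(1 / 2) : ℝ) * (‖U.c1.ft ξ‖ ^ 2 + ‖U.c2.ft ξ‖ ^ 2) =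
      (2 * π) ^ 2 * HnormSq U := by
  simp only [mul_add]
  rw [integral_add U.c1.mem U.c2.mem, U.c1.integral_weight_mul_norm_sq,
    U.c2.integral_weight_mul_norm_sq, ← mul_add, HnormSq]

lemma integral_weight_mul_dotFt_sq :
    ∫ ξ : R2, (1 + ‖ξ‖ ^ 2) ^ (-(1 / 2) : ℝ) * ‖dotFt U.c1.ft U.c2.ft ξ‖ ^ 2 =
      (2 * π) ^ 2 * wnormSq (-(1 / 2)) (divFt U) := by
  simp only [wnormSq, norm_divFt]
  rw [mul_inv_cancel_left₀ (by positivity)]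

lemma exists_integral_norm_g0hat_mul_sq_le (hk : 0 ≤ k) (hΓ : Bornology.IsBounded Γ) :
    ∃ C, 0 ≤ C ∧ ∀ U : Xelt Γ,
      ∫ ξ, ‖g0hat k ξ‖ * (‖U.c1.ft ξ‖ ^ 2 + ‖U.c2.ft ξ‖ ^ 2) ≤ C * HnormSq U := by
  obtain ⟨C, hC0, hC⟩ := exists_integral_norm_g0hat_mul_ft_sq_le hk hΓ
  refine ⟨C, hC0, fun U => ?_⟩
  simp only [mul_add]
  rw [integral_add (integrable_norm_g0hat_mul_norm_sq hk U.c1.cont U.c1.mem)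
    (integrable_norm_g0hat_mul_norm_sq hk U.c2.cont U.c2.mem), HnormSq, mul_add]
  exact add_le_add (hC U.c1) (hC U.c2)

lemma integrable_g0hat_mul_symbol (hk : 0 ≤ k) :
    Integrable fun ξ => g0hat k ξ * ((‖dotFt U.c1.ft U.c2.ft ξ‖ ^ 2 -
      k ^ 2 * (‖U.c1.ft ξ‖ ^ 2 + ‖U.c2.ft ξ‖ ^ 2) : ℝ) : ℂ) := by
  have h1 := U.c1.cont
  have h2 := U.c2.cont
  have hd := U.continuous_dotFt
  have hreal : Integrable fun ξ => ‖g0hat k ξ‖ * (‖dotFt U.c1.ft U.c2.ft ξ‖ ^ 2 -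
      k ^ 2 * (‖U.c1.ft ξ‖ ^ 2 + ‖U.c2.ft ξ‖ ^ 2)) := by
    simp only [mul_sub, mul_left_comm _ (k ^ 2)]
    exact (integrable_norm_g0hat_mul_norm_sq hk hd U.divMem).sub
      ((U.integrable_norm_g0hat_mul_sq hk).const_mul (k ^ 2))
  refine hreal.mono ((measurable_g0hat k).mul
    (Continuous.measurable (by fun_prop))).aestronglyMeasurable (.of_forall fun ξ => ?_)
  rw [norm_mul, norm_mul, norm_norm, Complex.norm_real]

lemma Bform_self_re (hk : 0 ≤ k) :
    (Bform k U U).re = ∫ ξ, (g0hat k ξ).re * (‖dotFt U.c1.ft U.c2.ft ξ‖ ^ 2 -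
      k ^ 2 * (‖U.c1.ft ξ‖ ^ 2 + ‖U.c2.ft ξ‖ ^ 2)) := by
  have hae : Bform k U U = ∫ ξ, g0hat k ξ * ((‖dotFt U.c1.ft U.c2.ft ξ‖ ^ 2 -
      k ^ 2 * (‖U.c1.ft ξ‖ ^ 2 + ‖U.c2.ft ξ‖ ^ 2) : ℝ) : ℂ) := by
    refine integral_congr_ae ?_
    filter_upwards [Measure.ae_ne volume 0] with ξ hξ
    exact Bintegrand_self k _ _ hξ
  rw [hae]
  refine (integral_re (U.integrable_g0hat_mul_symbol hk)).symm.trans ?_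
  simp only [RCLike.re_eq_complex_re, Complex.re_mul_ofReal]

theorem le_Bform_self_re (hk : 0 ≤ k) :
    (2 * π) ^ 2 * wnormSq (-(1 / 2)) (divFt U) - k ^ 2 * ((2 * π) ^ 2 * HnormSq U +
      ∫ ξ, ‖g0hat k ξ‖ * (‖U.c1.ft ξ‖ ^ 2 + ‖U.c2.ft ξ‖ ^ 2)) ≤ (Bform k U U).re := by
  have hP := U.integrable_weight_mul_sq
  have hgP := U.integrable_norm_g0hat_mul_sq hk
  have hre := (U.integrable_g0hat_mul_symbol hk).re
  simp only [RCLike.re_eq_complex_re, Complex.re_mul_ofReal] at hre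
  rw [← integral_weight_mul_dotFt_sq, ← integral_weight_mul_sq, ← integral_add hP hgP,
    ← integral_const_mul, U.Bform_self_re hk]
  refine (integral_sub U.divMem ((hP.add hgP).const_mul _)).symm.trans_le ?_
  exact integral_mono (U.divMem.sub ((hP.add hgP).const_mul _)) hre
    (le_g0hat_re_mul hk U.c1.ft U.c2.ft)

end Xelt

theorem statement2_general (Γ : Set R2) (hΓ : Bornology.IsBounded Γ) (k : ℝ) (hk : 0 ≤ k) :
    ∃ c > 0, ∃ C > 0, ∀ U : Xelt Γ, c * XnormSq U - C * HnormSq U ≤ (Bform k U U).re := by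
  obtain ⟨C₀, hC₀, hg⟩ := Xelt.exists_integral_norm_g0hat_mul_sq_le hk hΓ
  refine ⟨(2 * π) ^ 2, by positivity, (2 * π) ^ 2 * (1 + k ^ 2) + k ^ 2 * C₀, by positivity,
    fun U => ?_⟩
  calc (2 * π) ^ 2 * XnormSq U - ((2 * π) ^ 2 * (1 + k ^ 2) + k ^ 2 * C₀) * HnormSq U
      = (2 * π) ^ 2 * wnormSq (-(1 / 2)) (divFt U) -
          k ^ 2 * ((2 * π) ^ 2 * HnormSq U + C₀ * HnormSq U) := by
        rw [XnormSq]
        ring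
    _ ≤ (2 * π) ^ 2 * wnormSq (-(1 / 2)) (divFt U) - k ^ 2 * ((2 * π) ^ 2 * HnormSq U +
          ∫ ξ, ‖g0hat k ξ‖ * (‖U.c1.ft ξ‖ ^ 2 + ‖U.c2.ft ξ‖ ^ 2)) := by
        gcongr
        exact hg U
    _ ≤ (Bform k U U).re := U.le_Bform_self_re hk

/-- Lemma 3.2: Gårding-type coercivity of `B` on `X` relative to the
weaker norm of `H`: there are `c, C > 0` with `Re B(U,U) ≥ c ‖U‖²_X - C ‖U‖²_H`. -/
theorem statement2 (Γ : Set R2) (hΓ : IsLipschitzDomain Γ) (k : ℝ) (hk : 0 < k) :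
    ∃ c > 0, ∃ C > 0, ∀ U : Xelt Γ,
      c * XnormSq U - C * HnormSq U ≤ (Bform k U U).re :=
  statement2_general Γ hΓ.2.1 k hk.le

end
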